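/- Let $\mu > 0$ and let $Y$ be a Poisson random variable with mean $\mu$. If $k$ is a positive integer with $k \ge \mu$, then the tail conditional expectation satisfies $\mathbb{E}[Y \mid Y \ge k] \le k + \frac{\mu}{k + 1 - \mu}$. -/

import Mathlib

/-- The Poisson probability mass function: `P[Poi(μ) = i] = exp(-μ) μ^i / i!`. -/
noncomputable def poiPMF (μ : ℝ) (i : ℕ) : ℝ :=
  Real.exp (-μ) * μ ^ i / (Nat.factorial i : ℝ)

/-- The Poisson tail probability `P[Poi(μ) ≥ k]`. -/
noncomputable def poiTail (μ : ℝ) (k : ℕ) : ℝ :=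
  ∑' j : ℕ, poiPMF μ (k + j)

/-- The tail conditional expectation `E[Poi(μ) | Poi(μ) ≥ k]`,
i.e. `E[Y · 1_{Y ≥ k}] / P[Y ≥ k]`. -/
noncomputable def poiTCE (μ : ℝ) (k : ℕ) : ℝ :=
  (∑' j : ℕ, ((k + j : ℕ) : ℝ) * poiPMF μ (k + j)) / poiTail μ k

theorem poiPMF_succ_aux (μ : ℝ) (n : ℕ) :
    ((n : ℝ) + 1) * poiPMF μ (n + 1) = μ * poiPMF μ n := by
  unfold poiPMF
  rw [Nat.factorial_succ]
  push_cast
  have h1 : (n : ℝ) + 1 ≠ 0 := by positivity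
  have h2 : (n.factorial : ℝ) ≠ 0 := by positivity
  field_simp
  ring

theorem poisson_tail_conditional_expectation_upper_bound
    (μ : ℝ) (k : ℕ) (hμ : 0 < μ) (hk : 0 < k) (hkμ : μ ≤ k) :
    poiTCE μ k ≤ (k : ℝ) + μ / ((k : ℝ) + 1 - μ) := by
  have hpos : ∀ n, 0 < poiPMF μ n := fun n => by unfold poiPMF; positivity
  have hs : Summable (poiPMF μ) := by
    have := (Real.summable_pow_div_factorial μ).mul_left (Real.exp (-μ))
    exact this.congr fun j => by rw [poiPMF, mul_div_assoc]
  have hT : Summable (fun j => poiPMF μ (k + j)) := by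
    simpa only [add_comm k] using (summable_nat_add_iff k).2 hs
  have hN0 : Summable (fun n : ℕ => (n : ℝ) * poiPMF μ n) := by
    rw [← summable_nat_add_iff 1]
    push_cast
    simpa only [poiPMF_succ_aux] using hs.mul_left μ
  have hN : Summable (fun j : ℕ => ((k + j : ℕ) : ℝ) * poiPMF μ (k + j)) := by
    simpa only [add_comm k] using (summable_nat_add_iff k).2 hN0
  have hS : Summable (fun j : ℕ => (j : ℝ) * poiPMF μ (k + j)) := by
    have := hN.sub (hT.mul_left (k : ℝ))
    refine this.congr fun j => ?_
    push_cast
    ring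
  have hF1 : ∀ j : ℕ, ((j + 1 : ℕ) : ℝ) * ((k : ℝ) + (j + 1 : ℕ)) * poiPMF μ (k + (j + 1))
      = μ * ((j : ℝ) * poiPMF μ (k + j)) + μ * poiPMF μ (k + j) := fun j => by
    have := poiPMF_succ_aux μ (k + j)
    rw [← add_assoc]
    push_cast at this ⊢
    linear_combination ((j : ℝ) + 1) * this
  have hR := (hS.mul_left μ).add (hT.mul_left μ)
  have hF : Summable (fun j : ℕ => (j : ℝ) * ((k : ℝ) + j) * poiPMF μ (k + j)) := by
    rw [← summable_nat_add_iff 1]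
    exact hR.congr fun j => (hF1 j).symm
  have hFe : ∑' j : ℕ, (j : ℝ) * ((k : ℝ) + j) * poiPMF μ (k + j)
      = μ * (∑' j : ℕ, (j : ℝ) * poiPMF μ (k + j)) + μ * poiTail μ k := by
    rw [hF.tsum_eq_zero_add, tsum_congr hF1, (hS.mul_left μ).tsum_add (hT.mul_left μ),
      tsum_mul_left, tsum_mul_left]
    simp [poiTail]
  have hle : ((k : ℝ) + 1) * (∑' j : ℕ, (j : ℝ) * poiPMF μ (k + j))
      ≤ ∑' j : ℕ, (j : ℝ) * ((k : ℝ) + j) * poiPMF μ (k + j) := by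
    rw [← tsum_mul_left]
    refine (hS.mul_left _).tsum_le_tsum (fun j => ?_) hF
    rcases j with _ | j
    · simp
    · have h1 : (0 : ℝ) ≤ ((j + 1 : ℕ) : ℝ) * poiPMF μ (k + (j + 1)) * j :=
        mul_nonneg (mul_nonneg (Nat.cast_nonneg _) (hpos _).le) (Nat.cast_nonneg _)
      push_cast at h1 ⊢
      linarith
  have hNe : ∑' j : ℕ, ((k + j : ℕ) : ℝ) * poiPMF μ (k + j)
      = k * poiTail μ k + ∑' j : ℕ, (j : ℝ) * poiPMF μ (k + j) := by
    rw [poiTail, ← tsum_mul_left, ← (hT.mul_left _).tsum_add hS]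
    refine tsum_congr fun j => ?_
    push_cast
    ring
  have hTp : 0 < poiTail μ k := hT.tsum_pos (fun j => (hpos _).le) 0 (hpos _)
  have hd : 0 < (k : ℝ) + 1 - μ := by linarith
  rw [poiTCE, hNe, div_le_iff₀ hTp, add_mul, div_mul_eq_mul_div]
  gcongr
  rw [le_div_iff₀ hd]
  linarith
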